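/- arXiv:1608.03860 — 2 statements merged into one kernel-verified Lean document; each statement's English description precedes it below -/
import Mathlib

section
/- Let (W_n)_{n≥1} be graphons and W_0 a graphon with ‖W_n − W_0‖_□ → 0 as n → ∞. Assume the degree function of W_0 satisfies d_{W_0}(x) > 0 for almost every x ∈ [0,1]. Then the normalized kernels satisfy ‖W'_n − W'_0‖_□ → 0, and the normalized Laplacians satisfy ‖L'_{W_n} − L'_{W_0}‖_{∞→1} → 0 as n → ∞. -/
/-!
The difficulty is that the factors `d_W^{-1/2}` of the normalized kernel are unbounded and that
the degrees of the `Wₙ` need not be bounded below, or even positive. The remedy is to compare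
`W'` with `k(x) W(x,y) k(y)` for one bounded weight `k`, shared by all graphons involved.

Put `h = d_W^{-1/2}` and let `defect W k = ∫ (1 - √d_W k)²`, which dominates `∫ d_W (h - k)²`.
Writing `h h' - k k' = (h - k) h' + k (h' - k')`, a weighted AM-GM inequality together with
`∫ W(x,y) p(x) dx dy = ∫ d_W p` gives `‖W' - k W k‖₁ ≤ 4 ε` as soon as `defect W k ≤ ε²`
(`normKer_approx`).

Since `d_{W₀} > 0` almost everywhere, `k = max(d_{W₀}, δ)^{-1/2}` has small defect for `W₀` when
`δ` is small, by dominated convergence (`exists_weight`). Cut norm convergence forces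
`d_{Wₙ} → d_{W₀}` in `L¹`, and `(√a - √b)² ≤ |a - b|` then shows that the same `k` has small
defect for `Wₙ`, `n` large (`defect_le`). Finally `k (Wₙ - W₀) k` has `L^∞ → L¹` norm at most
`4 (sup k)² ‖Wₙ - W₀‖_□` (`integral_abs_integral_le`). This bounds `W'ₙ - W'₀` in the
`L^∞ → L¹` norm (`normKer_diff_le`), hence in the cut norm. The multiplication parts of the
Laplacians differ only on `{d_{Wₙ} = 0}`, whose measure is at most the defect
(`normLap_diff_le`).
-/

open MeasureTheory Set Filter
open scoped symmDiff

noncomputable section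

/-- The unit interval `[0,1]` as a subset of `ℝ`. -/
def I01 : Set ℝ := Set.Icc 0 1

/-- A graphon: a symmetric measurable kernel with values in `[0,1]`. -/
structure Graphon where
  W : ℝ → ℝ → ℝ
  measurable : Measurable (Function.uncurry W)
  symm : ∀ x y, W x y = W y x
  nonneg : ∀ x y, 0 ≤ W x y
  le_one : ∀ x y, W x y ≤ 1

/-- The cut norm `‖U‖_□` of a kernel `U`. -/
def cutNorm (U : ℝ → ℝ → ℝ) : ℝ :=
  sSup { r | ∃ A B : Set ℝ, MeasurableSet A ∧ MeasurableSet B ∧ A ⊆ I01 ∧ B ⊆ I01 ∧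
    r = |∫ x in A, ∫ y in B, U x y| }

/-- The degree function of a graphon: `d_W(x) = ∫₀¹ W(x,y) dy`. -/
def deg (V : Graphon) (x : ℝ) : ℝ := ∫ y in I01, V.W x y

/-- The normalized kernel `W'(x,y) = W(x,y)/√(d(x)d(y))` (and `0` where a degree vanishes). -/
def normKer (V : Graphon) (x y : ℝ) : ℝ :=
  if 0 < deg V x ∧ 0 < deg V y then V.W x y / Real.sqrt (deg V x * deg V y) else 0

/-- The normalized Laplacian `L'_W = M_{1{d>0}} − T_{W'}` applied to a function `f`. -/
def normLap (V : Graphon) (f : ℝ → ℝ) (x : ℝ) : ℝ :=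
  (if 0 < deg V x then f x else 0) - ∫ y in I01, normKer V x y * f y

/-- The `L^∞ → L¹` operator norm of a map `T` on functions:
`sup { ‖T f‖_{L¹[0,1]} : ‖f‖_∞ ≤ 1 }`. -/
def normInftyOne (T : (ℝ → ℝ) → ℝ → ℝ) : ℝ :=
  sSup { r | ∃ f : ℝ → ℝ, Measurable f ∧ (∀ x, |f x| ≤ 1) ∧ r = ∫ x in I01, |T f x| }

/-! ### The cut norm and the `L^∞ → L¹` norm -/

/-- Lebesgue measure on `[0,1]`, as a probability measure on `ℝ`. -/
abbrev μI : Measure ℝ := volume.restrict I01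

instance isProbabilityMeasure_μI : IsProbabilityMeasure μI :=
  ⟨by simp [μI, I01]⟩

lemma integrable_of_bdd {α : Type*} [MeasurableSpace α] {ν : Measure α} [IsFiniteMeasure ν]
    {F : α → ℝ} (hF : Measurable F) (C : ℝ) (hC : ∀ x, |F x| ≤ C) : Integrable F ν :=
  Integrable.of_bound hF.aestronglyMeasurable C (Eventually.of_forall hC)

/-- The positive and negative parts of `F` are its restrictions to two sets, each contributing at
most `c`. -/
lemma integral_abs_le_two_mul {F : ℝ → ℝ} (hF : Measurable F) (hi : Integrable F μI) {c : ℝ}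
    (hc : ∀ A : Set ℝ, MeasurableSet A → |∫ x in A, F x ∂μI| ≤ c) :
    ∫ x, |F x| ∂μI ≤ 2 * c := by
  have hA : MeasurableSet {x | 0 ≤ F x} := measurableSet_le measurable_const hF
  rw [← integral_add_compl hA hi.abs]
  have h1 : ∫ x in {x | 0 ≤ F x}, |F x| ∂μI = ∫ x in {x | 0 ≤ F x}, F x ∂μI :=
    setIntegral_congr_fun hA fun x hx => abs_of_nonneg hx
  have h2 : ∫ x in {x | 0 ≤ F x}ᶜ, |F x| ∂μI = - ∫ x in {x | 0 ≤ F x}ᶜ, F x ∂μI := by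
    rw [← integral_neg]
    exact setIntegral_congr_fun hA.compl fun x hx => abs_of_neg (not_le.mp hx)
  rw [h1, h2]
  have := (abs_le.mp (hc _ hA)).2
  have := (abs_le.mp (hc _ hA.compl)).1
  linarith

lemma cutNorm_nonneg (U : ℝ → ℝ → ℝ) : 0 ≤ cutNorm U := by
  apply Real.sSup_nonneg
  rintro r ⟨A, B, -, -, -, -, rfl⟩
  exact abs_nonneg _

lemma abs_integral_le_cutNorm {U : ℝ → ℝ → ℝ} (hb : ∀ x y, |U x y| ≤ 1)
    {A B : Set ℝ} (hA : MeasurableSet A) (hB : MeasurableSet B) :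
    |∫ x in A, ∫ y in B, U x y ∂μI ∂μI| ≤ cutNorm U := by
  have hI : MeasurableSet I01 := measurableSet_Icc
  have bound : ∀ (S : Set ℝ) (F : ℝ → ℝ), MeasurableSet S → S ⊆ I01 → (∀ x, |F x| ≤ 1) →
      |∫ x in S, F x| ≤ 1 := by
    intro S F hS hSI hF
    have hvol : volume S ≤ 1 := (measure_mono hSI).trans (by simp [I01])
    have h := norm_setIntegral_le_of_norm_le_const (μ := volume) (s := S) (f := F) (C := 1)
      (hvol.trans_lt (by simp)) (fun x _ => hF x)
    refine h.trans ?_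
    rw [one_mul]
    exact ENNReal.toReal_le_of_le_ofReal zero_le_one (by simpa using hvol)
  apply le_csSup
  · refine ⟨1, ?_⟩
    rintro r ⟨A, B, hA, hB, hAI, hBI, rfl⟩
    exact bound _ _ hA hAI fun x => bound _ _ hB hBI fun y => hb x y
  · refine ⟨A ∩ I01, B ∩ I01, hA.inter hI, hB.inter hI, inter_subset_right, inter_subset_right, ?_⟩
    rw [Measure.restrict_restrict hA, Measure.restrict_restrict hB]

/-- The `L^∞ → L¹` norm of a bounded kernel is at most four times its cut norm. -/
lemma integral_abs_integral_le {U : ℝ → ℝ → ℝ} (hU : Measurable (Function.uncurry U))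
    (hb : ∀ x y, |U x y| ≤ 1) {f : ℝ → ℝ} (hf : Measurable f) (hfb : ∀ x, |f x| ≤ 1) :
    ∫ x, |∫ y, U x y * f y ∂μI| ∂μI ≤ 4 * cutNorm U := by
  have hUf : Measurable (Function.uncurry fun x y => U x y * f y) :=
    hU.mul (hf.comp measurable_snd)
  have hUfb : ∀ x y, |U x y * f y| ≤ 1 := fun x y => by
    rw [abs_mul]; exact mul_le_one₀ (hb x y) (abs_nonneg _) (hfb y)
  have hUfi : ∀ ν ν' : Measure ℝ, [IsFiniteMeasure ν] → [IsFiniteMeasure ν'] →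
      Integrable (Function.uncurry fun x y => U x y * f y) (ν.prod ν') := fun ν ν' _ _ =>
    integrable_of_bdd hUf 1 fun p => hUfb p.1 p.2
  have hUi : ∀ ν ν' : Measure ℝ, [IsFiniteMeasure ν] → [IsFiniteMeasure ν'] →
      Integrable (Function.uncurry U) (ν.prod ν') := fun ν ν' _ _ =>
    integrable_of_bdd hU 1 fun p => hb p.1 p.2
  have key : ∫ x, |∫ y, U x y * f y ∂μI| ∂μI ≤ 2 * (2 * cutNorm U) := by
    apply integral_abs_le_two_mul
      (hUf.stronglyMeasurable.integral_prod_right (ν := μI)).measurable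
      (hUfi μI μI).integral_prod_left
    intro A hA
    rw [integral_integral_swap (hUfi (μI.restrict A) μI)]
    have hmeas : Measurable fun y => ∫ x in A, U x y ∂μI :=
      (hU.stronglyMeasurable.integral_prod_left' (μ := μI.restrict A)).measurable
    have hint : Integrable (fun y => ∫ x in A, U x y ∂μI) μI :=
      (hUi (μI.restrict A) μI).integral_prod_right
    calc |∫ y, ∫ x in A, U x y * f y ∂μI ∂μI|
        ≤ ∫ y, |∫ x in A, U x y * f y ∂μI| ∂μI := abs_integral_le_integral_abs
      _ ≤ ∫ y, |∫ x in A, U x y ∂μI| ∂μI := by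
          apply integral_mono_of_nonneg (Eventually.of_forall fun _ => abs_nonneg _) hint.abs
          refine Eventually.of_forall fun y => ?_
          simp only [integral_mul_const, abs_mul]
          exact mul_le_of_le_one_right (abs_nonneg _) (hfb y)
      _ ≤ 2 * cutNorm U := by
          apply integral_abs_le_two_mul hmeas hint
          intro B hB
          rw [← integral_integral_swap (hUi (μI.restrict A) (μI.restrict B))]
          exact abs_integral_le_cutNorm hb hA hB
  linarith

/-! ### Degrees and the normalized kernel -/

lemma measurable_deg (V : Graphon) : Measurable (deg V) :=
  (V.measurable.stronglyMeasurable.integral_prod_right (ν := μI)).measurable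

lemma integrable_section (V : Graphon) (x : ℝ) : Integrable (fun y => V.W x y) μI :=
  integrable_of_bdd (V.measurable.comp measurable_prodMk_left) 1 fun y => by
    rw [abs_of_nonneg (V.nonneg x y)]; exact V.le_one x y

lemma deg_nonneg (V : Graphon) (x : ℝ) : 0 ≤ deg V x := integral_nonneg fun y => V.nonneg x y

lemma deg_le_one (V : Graphon) (x : ℝ) : deg V x ≤ 1 := by
  have := integral_mono (integrable_section V x) (integrable_const (1 : ℝ)) (V.le_one x)
  simpa [deg] using this

/-- The factor `d_W(x)^{-1/2}`, equal to `0` where the degree vanishes. -/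
def invSqrtDeg (V : Graphon) (x : ℝ) : ℝ := (Real.sqrt (deg V x))⁻¹

lemma measurable_invSqrtDeg (V : Graphon) : Measurable (invSqrtDeg V) :=
  (measurable_deg V).sqrt.inv

lemma normKer_eq (V : Graphon) (x y : ℝ) :
    normKer V x y = V.W x y * (invSqrtDeg V x * invSqrtDeg V y) := by
  unfold normKer invSqrtDeg
  split_ifs with h
  · rw [Real.sqrt_mul h.1.le, div_eq_mul_inv, mul_inv]
  · rcases not_and_or.mp h with h | h
    · simp [Real.sqrt_eq_zero_of_nonpos (not_lt.mp h)]
    · simp [Real.sqrt_eq_zero_of_nonpos (not_lt.mp h)]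

lemma measurable_normKer (V : Graphon) : Measurable (Function.uncurry (normKer V)) := by
  have : Function.uncurry (normKer V) = fun p : ℝ × ℝ =>
      Function.uncurry V.W p * (invSqrtDeg V p.1 * invSqrtDeg V p.2) := by
    funext p; exact normKer_eq V p.1 p.2
  rw [this]
  exact V.measurable.mul (((measurable_invSqrtDeg V).comp measurable_fst).mul
    ((measurable_invSqrtDeg V).comp measurable_snd))

/-- Integrating a weight `p` of the first variable against `W` gives `∫ d_W p`. -/
lemma integrable_weight (V : Graphon) {p : ℝ → ℝ} (hp : Measurable p) (hp0 : ∀ x, 0 ≤ p x)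
    (hi : Integrable (fun x => deg V x * p x) μI) :
    Integrable (fun z : ℝ × ℝ => V.W z.1 z.2 * p z.1) (μI.prod μI) ∧
      ∫ z, V.W z.1 z.2 * p z.1 ∂(μI.prod μI) = ∫ x, deg V x * p x ∂μI := by
  have hm : Measurable fun z : ℝ × ℝ => V.W z.1 z.2 * p z.1 :=
    V.measurable.mul (hp.comp measurable_fst)
  have h1 : Integrable (fun z : ℝ × ℝ => V.W z.1 z.2 * p z.1) (μI.prod μI) := by
    rw [integrable_prod_iff hm.aestronglyMeasurable]
    refine ⟨Eventually.of_forall fun x => (integrable_section V x).mul_const (p x), ?_⟩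
    convert! hi using 2 with x
    simp only [Real.norm_eq_abs, abs_of_nonneg (mul_nonneg (V.nonneg _ _) (hp0 _)),
      integral_mul_const]
    rfl
  refine ⟨h1, ?_⟩
  rw [integral_prod _ h1]
  simp only [integral_mul_const]
  rfl

lemma integrable_weight_snd (V : Graphon) {p : ℝ → ℝ} (hp : Measurable p) (hp0 : ∀ x, 0 ≤ p x)
    (hi : Integrable (fun x => deg V x * p x) μI) :
    Integrable (fun z : ℝ × ℝ => V.W z.1 z.2 * p z.2) (μI.prod μI) ∧
      ∫ z, V.W z.1 z.2 * p z.2 ∂(μI.prod μI) = ∫ x, deg V x * p x ∂μI := by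
  obtain ⟨h1, h2⟩ := integrable_weight V hp hp0 hi
  have he : (fun z : ℝ × ℝ => V.W z.1 z.2 * p z.2) =
      (fun z : ℝ × ℝ => V.W z.1 z.2 * p z.1) ∘ Prod.swap := by
    funext z; simp [V.symm z.1 z.2]
  rw [he]
  exact ⟨h1.swap, (integral_prod_swap (fun z : ℝ × ℝ => V.W z.1 z.2 * p z.1)).trans h2⟩

/-! ### Approximation by bounded weights -/

/-- The squared `L²` distance between `1` and `√d_W · k`: how far the bounded weight `k` is from
`d_W^{-1/2}`, measured with the density `d_W`. -/
def defect (V : Graphon) (k : ℝ → ℝ) : ℝ := ∫ x, (1 - Real.sqrt (deg V x) * k x) ^ 2 ∂μI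

lemma sqrt_deg_le_one (V : Graphon) (x : ℝ) : Real.sqrt (deg V x) ≤ 1 :=
  Real.sqrt_le_one.mpr (deg_le_one V x)

lemma integrable_defect (V : Graphon) {k : ℝ → ℝ} (hk : Measurable k) {K : ℝ}
    (hk0 : ∀ x, 0 ≤ k x) (hkK : ∀ x, k x ≤ K) :
    Integrable (fun x => (1 - Real.sqrt (deg V x) * k x) ^ 2) μI := by
  have hm : Measurable fun x => (1 - Real.sqrt (deg V x) * k x) ^ 2 :=
    (measurable_const.sub ((measurable_deg V).sqrt.mul hk)).pow_const 2
  refine integrable_of_bdd hm ((1 + K) ^ 2) fun x => ?_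
  rw [abs_of_nonneg (sq_nonneg _)]
  have h1 := sqrt_deg_le_one V x
  have h0 := Real.sqrt_nonneg (deg V x)
  have h2 : Real.sqrt (deg V x) * k x ≤ K :=
    (mul_le_of_le_one_left (hk0 x) h1).trans (hkK x)
  have h3 : 0 ≤ Real.sqrt (deg V x) * k x := mul_nonneg h0 (hk0 x)
  apply sq_le_sq' <;> linarith

/-- Replacing both factors `d_W^{-1/2}` of the normalized kernel by a weight `k` of small defect
changes it by little in `L¹`. -/
lemma normKer_approx (V : Graphon) {k : ℝ → ℝ} (hk : Measurable k) {K : ℝ}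
    (hk0 : ∀ x, 0 ≤ k x) (hkK : ∀ x, k x ≤ K) {ε : ℝ} (hε : 0 < ε) (hε1 : ε ≤ 1)
    (hq : defect V k ≤ ε ^ 2) :
    Integrable (fun z : ℝ × ℝ => normKer V z.1 z.2 - V.W z.1 z.2 * (k z.1 * k z.2))
      (μI.prod μI) ∧
    ∫ z, |normKer V z.1 z.2 - V.W z.1 z.2 * (k z.1 * k z.2)| ∂(μI.prod μI) ≤ 4 * ε := by
  set h := invSqrtDeg V with hh
  have hhm : Measurable h := measurable_invSqrtDeg V
  have hh0 : ∀ x, 0 ≤ h x := fun x => inv_nonneg.mpr (Real.sqrt_nonneg _)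
  have hdi := integrable_defect V hk hk0 hkK
  have hd := measurable_deg V
  have dsq : ∀ x, deg V x = Real.sqrt (deg V x) ^ 2 := fun x => (Real.sq_sqrt (deg_nonneg V x)).symm
  -- the three pointwise bounds on the weights
  have b1 : ∀ x, deg V x * (h x - k x) ^ 2 ≤ (1 - Real.sqrt (deg V x) * k x) ^ 2 := by
    intro x
    by_cases h0 : Real.sqrt (deg V x) = 0
    · rw [dsq x, h0]; norm_num
    · have : Real.sqrt (deg V x) * h x = 1 := mul_inv_cancel₀ h0
      rw [dsq x, ← mul_pow, mul_sub, this, Real.sqrt_sq (Real.sqrt_nonneg _)]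
  have b2 : ∀ x, deg V x * h x ^ 2 ≤ 1 := by
    intro x
    by_cases h0 : Real.sqrt (deg V x) = 0
    · rw [dsq x, h0]; norm_num
    · have : Real.sqrt (deg V x) * h x = 1 := mul_inv_cancel₀ h0
      rw [dsq x, ← mul_pow, this]; norm_num
  have b3 : ∀ x, deg V x * k x ^ 2 ≤ 2 + 2 * (1 - Real.sqrt (deg V x) * k x) ^ 2 := by
    intro x
    rw [dsq x, ← mul_pow, Real.sqrt_sq (Real.sqrt_nonneg _)]
    nlinarith [sq_nonneg (Real.sqrt (deg V x) * k x - 2)]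
  have nn : ∀ (p : ℝ → ℝ) x, 0 ≤ deg V x * p x ^ 2 := fun p x =>
    mul_nonneg (deg_nonneg V x) (sq_nonneg _)
  have i1 : Integrable (fun x => deg V x * (h x - k x) ^ 2) μI :=
    hdi.mono' (hd.mul ((hhm.sub hk).pow_const 2)).aestronglyMeasurable
      (Eventually.of_forall fun x => by
        rw [Real.norm_of_nonneg (nn (fun x => h x - k x) x)]; exact b1 x)
  have i2 : Integrable (fun x => deg V x * h x ^ 2) μI :=
    (integrable_const (1 : ℝ)).mono' (hd.mul (hhm.pow_const 2)).aestronglyMeasurable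
      (Eventually.of_forall fun x => by rw [Real.norm_of_nonneg (nn h x)]; exact b2 x)
  have hdi' : Integrable (fun x => 2 + 2 * (1 - Real.sqrt (deg V x) * k x) ^ 2) μI :=
    (integrable_const (2 : ℝ)).add (hdi.const_mul 2)
  have i3 : Integrable (fun x => deg V x * k x ^ 2) μI :=
    hdi'.mono' (hd.mul (hk.pow_const 2)).aestronglyMeasurable
      (Eventually.of_forall fun x => by rw [Real.norm_of_nonneg (nn k x)]; exact b3 x)
  have e1 : ∫ x, deg V x * (h x - k x) ^ 2 ∂μI ≤ ε ^ 2 := (integral_mono i1 hdi b1).trans hq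
  have e2 : ∫ x, deg V x * h x ^ 2 ∂μI ≤ 1 := by
    simpa using integral_mono i2 (integrable_const (1 : ℝ)) b2
  have e3 : ∫ x, deg V x * k x ^ 2 ∂μI ≤ 4 := by
    have := integral_mono i3 hdi' b3
    rw [integral_add (integrable_const _) (hdi.const_mul 2), integral_const_mul] at this
    have h4 : ∫ x, (1 - Real.sqrt (deg V x) * k x) ^ 2 ∂μI ≤ ε ^ 2 := hq
    simp at this
    nlinarith
  have hhk : Measurable fun x => (h x - k x) ^ 2 := (hhm.sub hk).pow_const 2
  obtain ⟨I1, E1⟩ := integrable_weight V hhk (fun x => sq_nonneg _) i1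
  obtain ⟨I2, E2⟩ := integrable_weight_snd V (hhm.pow_const 2) (fun x => sq_nonneg _) i2
  obtain ⟨I3, E3⟩ := integrable_weight V (hk.pow_const 2) (fun x => sq_nonneg _) i3
  obtain ⟨I4, E4⟩ := integrable_weight_snd V hhk (fun x => sq_nonneg _) i1
  -- `h h' - k k' = (h - k) h' + k (h' - k')`, then `2ab ≤ a²/ε + ε b²` on each product
  have pt : ∀ z : ℝ × ℝ, |normKer V z.1 z.2 - V.W z.1 z.2 * (k z.1 * k z.2)| ≤
      (2 * ε)⁻¹ * (V.W z.1 z.2 * (h z.1 - k z.1) ^ 2) + ε / 2 * (V.W z.1 z.2 * h z.2 ^ 2) +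
      (ε / 2 * (V.W z.1 z.2 * k z.1 ^ 2) + (2 * ε)⁻¹ * (V.W z.1 z.2 * (h z.2 - k z.2) ^ 2)) := by
    rintro ⟨x, y⟩
    have am : ∀ a b : ℝ, |a * b| ≤ (2 * ε)⁻¹ * a ^ 2 + ε / 2 * b ^ 2 := by
      intro a b
      have e : (2 * ε)⁻¹ * a ^ 2 + ε / 2 * b ^ 2 - |a| * |b| =
          (2 * ε)⁻¹ * (|a| - ε * |b|) ^ 2 := by
        rw [← sq_abs a, ← sq_abs b]; field_simp; ring
      have : 0 ≤ (2 * ε)⁻¹ * (|a| - ε * |b|) ^ 2 := by positivity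
      rw [abs_mul]; linarith
    have hw := V.nonneg x y
    have e : normKer V x y - V.W x y * (k x * k y) =
        V.W x y * ((h x - k x) * h y + (h y - k y) * k x) := by
      rw [normKer_eq]; ring
    simp only
    rw [e, abs_mul, abs_of_nonneg hw]
    have := (abs_add_le ((h x - k x) * h y) ((h y - k y) * k x)).trans
      (add_le_add (am (h x - k x) (h y)) (am (h y - k y) (k x)))
    refine (mul_le_mul_of_nonneg_left this hw).trans (le_of_eq ?_)
    ring
  have IB := ((I1.const_mul (2 * ε)⁻¹).add (I2.const_mul (ε / 2))).add
    ((I3.const_mul (ε / 2)).add (I4.const_mul (2 * ε)⁻¹))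
  have hmeas : Measurable fun z : ℝ × ℝ =>
      normKer V z.1 z.2 - V.W z.1 z.2 * (k z.1 * k z.2) :=
    (measurable_normKer V).sub
      (V.measurable.mul ((hk.comp measurable_fst).mul (hk.comp measurable_snd)))
  have hint := IB.mono' hmeas.aestronglyMeasurable (Eventually.of_forall pt)
  refine ⟨hint, ?_⟩
  refine (integral_mono hint.abs IB pt).trans ?_
  simp only [Pi.add_def]
  rw [integral_add, integral_add, integral_add, integral_const_mul, integral_const_mul,
    integral_const_mul, integral_const_mul, E1, E2, E3, E4]
  · have e1' : (2 * ε)⁻¹ * ∫ x, deg V x * (h x - k x) ^ 2 ∂μI ≤ ε / 2 := by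
      refine (mul_le_mul_of_nonneg_left e1 (by positivity)).trans (le_of_eq ?_)
      field_simp
    have e2' := mul_le_mul_of_nonneg_left e2 (half_pos hε).le
    have e3' := mul_le_mul_of_nonneg_left e3 (half_pos hε).le
    linarith
  · exact I3.const_mul _
  · exact I4.const_mul _
  · exact I1.const_mul _
  · exact I2.const_mul _
  · exact (I1.const_mul _).add (I2.const_mul _)
  · exact (I3.const_mul _).add (I4.const_mul _)

/-- A degree function that is positive almost everywhere admits bounded weights of arbitrarily
small defect, namely `k = max(d, δ)^{-1/2}` with `δ → 0`. -/
lemma exists_weight (V : Graphon) (hdeg : ∀ᵐ x ∂μI, 0 < deg V x) {η : ℝ} (hη : 0 < η) :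
    ∃ k : ℝ → ℝ, Measurable k ∧ (∀ x, 0 ≤ k x) ∧ (∃ K : ℝ, 0 < K ∧ ∀ x, k x ≤ K) ∧
      defect V k ≤ η := by
  let k : ℕ → ℝ → ℝ := fun m x => (Real.sqrt (max (deg V x) (1 / ((m : ℝ) + 1))))⁻¹
  have hδ : ∀ m : ℕ, 0 < 1 / ((m : ℝ) + 1) := fun m => by positivity
  have hkm : ∀ m, Measurable (k m) := fun m => ((measurable_deg V).max measurable_const).sqrt.inv
  have hk0 : ∀ m x, 0 ≤ k m x := fun m x => inv_nonneg.mpr (Real.sqrt_nonneg _)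
  have hkK : ∀ m x, k m x ≤ (Real.sqrt (1 / ((m : ℝ) + 1)))⁻¹ := fun m x =>
    inv_anti₀ (Real.sqrt_pos.mpr (hδ m)) (Real.sqrt_le_sqrt (le_max_right _ _))
  have lim : Tendsto (fun m => defect V (k m)) atTop (nhds 0) := by
    have h0 : (0 : ℝ) = ∫ _, (0 : ℝ) ∂μI := by simp
    rw [h0]
    apply tendsto_integral_of_dominated_convergence (fun _ => (1 : ℝ))
      (fun m => (integrable_defect V (hkm m) (hk0 m) (hkK m)).aestronglyMeasurable)
      (integrable_const _)
    · intro m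
      refine Eventually.of_forall fun x => ?_
      have h1 : Real.sqrt (deg V x) * k m x ≤ 1 := by
        have hp : 0 < Real.sqrt (max (deg V x) (1 / ((m : ℝ) + 1))) :=
          Real.sqrt_pos.mpr (lt_max_of_lt_right (hδ m))
        exact (mul_inv_le_iff₀ hp).mpr
          (by rw [one_mul]; exact Real.sqrt_le_sqrt (le_max_left _ _))
      have h2 : 0 ≤ Real.sqrt (deg V x) * k m x := mul_nonneg (Real.sqrt_nonneg _) (hk0 m x)
      rw [Real.norm_of_nonneg (sq_nonneg _)]
      nlinarith
    · filter_upwards [hdeg] with x hx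
      apply tendsto_const_nhds.congr'
      have ev : ∀ᶠ m : ℕ in atTop, 1 / ((m : ℝ) + 1) < deg V x :=
        tendsto_one_div_add_atTop_nhds_zero_nat.eventually_lt_const hx
      filter_upwards [ev] with m hm
      have : k m x = (Real.sqrt (deg V x))⁻¹ := by simp only [k, max_eq_left hm.le]
      rw [this, mul_inv_cancel₀ (Real.sqrt_pos.mpr hx).ne']
      norm_num
  obtain ⟨m, hm⟩ := (lim.eventually_lt_const hη).exists
  exact ⟨k m, hkm m, hk0 m, ⟨_, inv_pos.mpr (Real.sqrt_pos.mpr (hδ m)), hkK m⟩, hm.le⟩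

/-- The defect is stable under `L¹` perturbation of the degree, because
`(√a - √b)² ≤ |a - b|`. -/
lemma defect_le (V V₀ : Graphon) {k : ℝ → ℝ} (hk : Measurable k) {K : ℝ}
    (hk0 : ∀ x, 0 ≤ k x) (hkK : ∀ x, k x ≤ K) :
    defect V k ≤ 2 * defect V₀ k + 2 * K ^ 2 * ∫ x, |deg V x - deg V₀ x| ∂μI := by
  have i0 := integrable_defect V₀ hk hk0 hkK
  have iD : Integrable (fun x => |deg V x - deg V₀ x|) μI := by
    refine Integrable.abs (Integrable.sub ?_ ?_)
    · exact integrable_of_bdd (measurable_deg V) 1 fun x => by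
        rw [abs_of_nonneg (deg_nonneg V x)]; exact deg_le_one V x
    · exact integrable_of_bdd (measurable_deg V₀) 1 fun x => by
        rw [abs_of_nonneg (deg_nonneg V₀ x)]; exact deg_le_one V₀ x
  unfold defect
  rw [← integral_const_mul, ← integral_const_mul,
    ← integral_add (i0.const_mul _) (iD.const_mul _)]
  refine integral_mono (integrable_defect V hk hk0 hkK) ((i0.const_mul _).add (iD.const_mul _)) ?_
  intro x
  simp only
  set s := Real.sqrt (deg V x) with hs
  set t := Real.sqrt (deg V₀ x) with ht
  have hs0 : 0 ≤ s := Real.sqrt_nonneg _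
  have ht0 : 0 ≤ t := Real.sqrt_nonneg _
  have es : deg V x = s ^ 2 := (Real.sq_sqrt (deg_nonneg V x)).symm
  have et : deg V₀ x = t ^ 2 := (Real.sq_sqrt (deg_nonneg V₀ x)).symm
  have hst : (s - t) ^ 2 ≤ |deg V x - deg V₀ x| := by
    rw [es, et, sq_sub_sq, abs_mul, abs_of_nonneg (add_nonneg hs0 ht0), ← sq_abs, sq]
    exact mul_le_mul_of_nonneg_right (abs_le.mpr ⟨by linarith, by linarith⟩) (abs_nonneg _)
  have hkk : k x ^ 2 ≤ K ^ 2 := pow_le_pow_left₀ (hk0 x) (hkK x) 2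
  have h2 : k x ^ 2 * (s - t) ^ 2 ≤ K ^ 2 * |deg V x - deg V₀ x| :=
    mul_le_mul hkk hst (sq_nonneg _) (sq_nonneg _)
  nlinarith [sq_nonneg ((1 - t * k x) + (s - t) * k x)]

/-! ### Comparison of normalized kernels and Laplacians -/

lemma integrable_normKer (V : Graphon) :
    Integrable (fun z : ℝ × ℝ => normKer V z.1 z.2) (μI.prod μI) := by
  have h := (normKer_approx V (k := fun _ => 0) measurable_const (K := 0) (fun _ => le_rfl)
    (fun _ => le_rfl) one_pos le_rfl (by simp [defect])).1
  simpa using h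

/-- Quantitative comparison of two normalized kernels in the `L^∞ → L¹` norm, through the weighted
kernels `k(x) W(x,y) k(y)`. -/
lemma normKer_diff_le (V V₀ : Graphon) {k : ℝ → ℝ} (hk : Measurable k) {K : ℝ} (hK : 0 < K)
    (hk0 : ∀ x, 0 ≤ k x) (hkK : ∀ x, k x ≤ K) {ε : ℝ} (hε : 0 < ε) (hε1 : ε ≤ 1)
    (hq : defect V k ≤ ε ^ 2) (hq₀ : defect V₀ k ≤ ε ^ 2)
    {f : ℝ → ℝ} (hf : Measurable f) (hfb : ∀ x, |f x| ≤ 1) :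
    ∫ x, |∫ y, (normKer V x y - normKer V₀ x y) * f y ∂μI| ∂μI ≤
      8 * ε + 4 * K ^ 2 * cutNorm fun x y => V.W x y - V₀.W x y := by
  obtain ⟨IR, ER⟩ := normKer_approx V hk hk0 hkK hε hε1 hq
  obtain ⟨IR₀, ER₀⟩ := normKer_approx V₀ hk hk0 hkK hε hε1 hq₀
  set U : ℝ → ℝ → ℝ := fun x y => V.W x y - V₀.W x y with hUdef
  have hU : Measurable (Function.uncurry U) := V.measurable.sub V₀.measurable
  have hUb : ∀ x y, |U x y| ≤ 1 := fun x y => abs_le.mpr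
    ⟨by linarith [V.nonneg x y, V₀.le_one x y], by linarith [V.le_one x y, V₀.nonneg x y]⟩
  let g : ℝ → ℝ := fun y => k y / K * f y
  have hg : Measurable g := (hk.div_const K).mul hf
  have hgb : ∀ y, |g y| ≤ 1 := fun y => by
    simp only [g, abs_mul]
    refine mul_le_one₀ ?_ (abs_nonneg _) (hfb y)
    rw [abs_of_nonneg (div_nonneg (hk0 y) hK.le)]
    exact (div_le_one hK).mpr (hkK y)
  have hUg : Integrable (Function.uncurry fun x y => U x y * g y) (μI.prod μI) :=
    integrable_of_bdd (hU.mul (hg.comp measurable_snd)) 1 fun p => by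
      simp only [Function.uncurry, abs_mul]
      exact mul_le_one₀ (hUb _ _) (abs_nonneg _) (hgb _)
  have mulf : ∀ {F : ℝ → ℝ}, Integrable F μI → Integrable (fun y => F y * f y) μI :=
    fun {F} hF => hF.mul_bdd (c := 1) hf.aestronglyMeasurable (Eventually.of_forall hfb)
  have bf : ∀ {F : ℝ → ℝ}, Integrable F μI → |∫ y, F y * f y ∂μI| ≤ ∫ y, |F y| ∂μI := by
    intro F hF
    refine abs_integral_le_integral_abs.trans (integral_mono (mulf hF).abs hF.abs fun y => ?_)
    simp only [abs_mul]
    exact mul_le_of_le_one_right (abs_nonneg _) (hfb y)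
  have JR : Integrable (fun x => ∫ y, |normKer V x y - V.W x y * (k x * k y)| ∂μI) μI :=
    IR.integral_norm_prod_left
  have JR₀ : Integrable (fun x => ∫ y, |normKer V₀ x y - V₀.W x y * (k x * k y)| ∂μI) μI :=
    IR₀.integral_norm_prod_left
  have JU : Integrable (fun x => K ^ 2 * |∫ y, U x y * g y ∂μI|) μI :=
    hUg.integral_prod_left.abs.const_mul _
  have pt : ∀ᵐ x ∂μI, |∫ y, (normKer V x y - normKer V₀ x y) * f y ∂μI| ≤
      ((∫ y, |normKer V x y - V.W x y * (k x * k y)| ∂μI) +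
        ∫ y, |normKer V₀ x y - V₀.W x y * (k x * k y)| ∂μI) +
      K ^ 2 * |∫ y, U x y * g y ∂μI| := by
    filter_upwards [IR.prod_right_ae, IR₀.prod_right_ae, hUg.prod_right_ae] with x h1 h2 h3
    have e : (∫ y, (normKer V x y - normKer V₀ x y) * f y ∂μI) =
        (∫ y, (normKer V x y - V.W x y * (k x * k y)) * f y ∂μI) -
          (∫ y, (normKer V₀ x y - V₀.W x y * (k x * k y)) * f y ∂μI) +
          k x * K * ∫ y, U x y * g y ∂μI := by
      rw [← integral_const_mul, ← integral_sub (mulf h1) (mulf h2),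
        ← integral_add (by exact (mulf h1).sub (mulf h2)) (by exact h3.const_mul (k x * K))]
      refine integral_congr_ae (Eventually.of_forall fun y => ?_)
      simp only [U, g]
      field_simp
      ring
    rw [e]
    refine (abs_add_le _ _).trans (add_le_add ((abs_sub _ _).trans
      (add_le_add (bf h1) (bf h2))) ?_)
    rw [abs_mul, abs_of_nonneg (mul_nonneg (hk0 x) hK.le), sq]
    exact mul_le_mul_of_nonneg_right (mul_le_mul_of_nonneg_right (hkK x) hK.le) (abs_nonneg _)
  refine (integral_mono_of_nonneg (Eventually.of_forall fun _ => abs_nonneg _)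
    ((JR.add JR₀).add JU) pt).trans ?_
  simp only [Pi.add_def]
  rw [integral_add (by exact JR.add JR₀) JU, integral_add JR JR₀, integral_const_mul]
  rw [integral_prod _ IR.abs] at ER
  rw [integral_prod _ IR₀.abs] at ER₀
  have hcut := mul_le_mul_of_nonneg_left (integral_abs_integral_le hU hUb hg hgb) (sq_nonneg K)
  simp only at ER ER₀
  linarith

/-- The multiplication parts of the two Laplacians differ only where the degree of `V` vanishes,
and the defect integrand of `V` equals `1` there. -/
lemma normLap_diff_le (V V₀ : Graphon) (hdeg : ∀ᵐ x ∂μI, 0 < deg V₀ x)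
    {k : ℝ → ℝ} (hk : Measurable k) {K : ℝ} (hk0 : ∀ x, 0 ≤ k x) (hkK : ∀ x, k x ≤ K)
    {f : ℝ → ℝ} (hf : Measurable f) (hfb : ∀ x, |f x| ≤ 1) :
    ∫ x, |normLap V f x - normLap V₀ f x| ∂μI ≤
      defect V k + ∫ x, |∫ y, (normKer V x y - normKer V₀ x y) * f y ∂μI| ∂μI := by
  have iN := integrable_normKer V
  have iN₀ := integrable_normKer V₀
  have iD : Integrable (fun z : ℝ × ℝ => (normKer V z.1 z.2 - normKer V₀ z.1 z.2) * f z.2)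
      (μI.prod μI) :=
    (iN.sub iN₀).mul_bdd (c := 1) (hf.comp measurable_snd).aestronglyMeasurable
      (Eventually.of_forall fun z => hfb z.2)
  have mulf : ∀ {F : ℝ → ℝ}, Integrable F μI → Integrable (fun y => F y * f y) μI :=
    fun {F} hF => hF.mul_bdd (c := 1) hf.aestronglyMeasurable (Eventually.of_forall hfb)
  have id := integrable_defect V hk hk0 hkK
  have iI : Integrable (fun x => |∫ y, (normKer V x y - normKer V₀ x y) * f y ∂μI|) μI :=
    iD.integral_prod_left.abs
  unfold defect
  rw [← integral_add id iI]
  refine integral_mono_of_nonneg (Eventually.of_forall fun _ => abs_nonneg _) (id.add iI) ?_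
  filter_upwards [hdeg, iN.prod_right_ae, iN₀.prod_right_ae] with x hx h1 h2
  have e : normLap V f x - normLap V₀ f x = (if 0 < deg V x then 0 else - f x) -
      ∫ y, (normKer V x y - normKer V₀ x y) * f y ∂μI := by
    simp only [sub_mul]
    rw [integral_sub (mulf h1) (mulf h2)]
    simp only [normLap, if_pos hx]
    split_ifs <;> ring
  rw [e]
  refine (abs_sub _ _).trans (add_le_add ?_ le_rfl)
  split_ifs with h
  · simpa using sq_nonneg _
  · rw [Real.sqrt_eq_zero_of_nonpos (not_lt.mp h)]
    simpa using hfb x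

lemma cutNorm_le_of_integral_abs_le {U : ℝ → ℝ → ℝ}
    (hU : Integrable (fun z : ℝ × ℝ => U z.1 z.2) (μI.prod μI)) {c : ℝ} (hc : 0 ≤ c)
    (h : ∀ f : ℝ → ℝ, Measurable f → (∀ x, |f x| ≤ 1) →
      ∫ x, |∫ y, U x y * f y ∂μI| ∂μI ≤ c) : cutNorm U ≤ c := by
  refine Real.sSup_le ?_ hc
  rintro r ⟨A, B, hA, hB, hAI, hBI, rfl⟩
  rw [← Measure.restrict_restrict_of_subset hAI, ← Measure.restrict_restrict_of_subset hBI]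
  have hfm : Measurable (B.indicator fun _ => (1 : ℝ)) := measurable_const.indicator hB
  have hfb : ∀ y, |B.indicator (fun _ => (1 : ℝ)) y| ≤ 1 := fun y => by
    by_cases hy : y ∈ B <;> simp [hy]
  have e : ∀ x, ∫ y in B, U x y ∂μI = ∫ y, U x y * B.indicator (fun _ => (1 : ℝ)) y ∂μI := by
    intro x
    rw [← integral_indicator hB]
    refine integral_congr_ae (Eventually.of_forall fun y => ?_)
    by_cases hy : y ∈ B <;> simp [hy]
  have iU : Integrable (fun z : ℝ × ℝ => U z.1 z.2 * B.indicator (fun _ => (1 : ℝ)) z.2)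
      (μI.prod μI) :=
    hU.mul_bdd (c := 1) (hfm.comp measurable_snd).aestronglyMeasurable
      (Eventually.of_forall fun z => hfb z.2)
  change |∫ x in A, ∫ y in B, U x y ∂μI ∂μI| ≤ c
  simp only [e]
  refine abs_integral_le_integral_abs.trans (le_trans ?_ (h _ hfm hfb))
  exact setIntegral_le_integral iU.integral_prod_left.abs
    (Eventually.of_forall fun _ => abs_nonneg _)

/-- **Convergence of normalized Laplacians.** If `‖Wₙ − W₀‖_□ → 0` and the degree
function of `W₀` is positive almost everywhere, then the normalized kernels converge
in cut norm, and the normalized Laplacians converge in the `L^∞ → L¹` operator norm. -/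
theorem normalized_laplacian_convergence
    (W : ℕ → Graphon)
    (hconv : Tendsto (fun n => cutNorm fun x y => (W n).W x y - (W 0).W x y)
      atTop (nhds 0))
    (hdeg : ∀ᵐ x ∂(volume.restrict I01), 0 < deg (W 0) x) :
    Tendsto (fun n => cutNorm fun x y => normKer (W n) x y - normKer (W 0) x y)
      atTop (nhds 0) ∧
    Tendsto (fun n => normInftyOne fun f x => normLap (W n) f x - normLap (W 0) f x)
      atTop (nhds 0) := by
  -- a bounded weight good for `W 0` stays good for `W n` once the degrees are close in `L¹`
  have main : ∀ ε : ℝ, 0 < ε → ∀ᶠ n in atTop, ∃ k : ℝ → ℝ, ∃ K : ℝ, Measurable k ∧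
      (∀ x, 0 ≤ k x) ∧ (∀ x, k x ≤ K) ∧ defect (W n) k ≤ ε / 2 ∧
      ∀ f : ℝ → ℝ, Measurable f → (∀ x, |f x| ≤ 1) →
        ∫ x, |∫ y, (normKer (W n) x y - normKer (W 0) x y) * f y ∂μI| ∂μI ≤ ε / 2 := by
    intro ε hε
    let θ : ℝ := min 1 (ε / 32)
    have hθ : 0 < θ := lt_min one_pos (by positivity)
    have hθ1 : θ ≤ 1 := min_le_left _ _
    have hθε : θ ≤ ε / 32 := min_le_right _ _
    obtain ⟨k, hk, hk0, ⟨K, hK, hkK⟩, hq₀⟩ :=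
      exists_weight (W 0) hdeg (η := θ ^ 2 / 4) (by positivity)
    have hτ : 0 < θ ^ 2 / (16 * K ^ 2) := by positivity
    filter_upwards [hconv.eventually_lt_const hτ] with n hn
    set c := cutNorm fun x y => (W n).W x y - (W 0).W x y with hc
    have hcK : 16 * K ^ 2 * c ≤ θ ^ 2 := by
      rw [lt_div_iff₀ (by positivity)] at hn; linarith
    have hU : Measurable (Function.uncurry fun x y => (W n).W x y - (W 0).W x y) :=
      (W n).measurable.sub (W 0).measurable
    have hUb : ∀ x y, |(W n).W x y - (W 0).W x y| ≤ 1 := fun x y => abs_le.mpr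
      ⟨by linarith [(W n).nonneg x y, (W 0).le_one x y],
        by linarith [(W n).le_one x y, (W 0).nonneg x y]⟩
    have hdegs : ∫ x, |deg (W n) x - deg (W 0) x| ∂μI ≤ 4 * c := by
      have h := integral_abs_integral_le hU hUb (f := fun _ => 1) measurable_const (by simp)
      simp only [mul_one] at h
      refine le_trans (le_of_eq (integral_congr_ae (Eventually.of_forall fun x => ?_))) h
      simp only [deg]
      rw [integral_sub (integrable_section _ x) (integrable_section _ x)]
    have hq : defect (W n) k ≤ θ ^ 2 := by
      have h1 := defect_le (W n) (W 0) hk hk0 hkK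
      have h2 := mul_le_mul_of_nonneg_left hdegs (by positivity : 0 ≤ 2 * K ^ 2)
      linarith
    have hθ2 : θ ^ 2 ≤ θ := by nlinarith
    refine ⟨k, K, hk, hk0, hkK, by linarith, fun f hf hfb => ?_⟩
    have h := normKer_diff_le (W n) (W 0) hk hK hk0 hkK hθ hθ1 hq
      (hq₀.trans (by nlinarith)) hf hfb
    linarith
  constructor
  · rw [Metric.tendsto_atTop']
    intro ε hε
    obtain ⟨N, hN⟩ := eventually_atTop.mp (main ε hε)
    refine ⟨N, fun n hn => ?_⟩
    obtain ⟨-, -, -, -, -, -, h⟩ := hN n hn.le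
    rw [Real.dist_0_eq_abs, abs_of_nonneg (cutNorm_nonneg _)]
    have := cutNorm_le_of_integral_abs_le (c := ε / 2)
      ((integrable_normKer (W n)).sub (integrable_normKer (W 0))) (by positivity) h
    linarith
  · rw [Metric.tendsto_atTop']
    intro ε hε
    obtain ⟨N, hN⟩ := eventually_atTop.mp (main (ε / 2) (half_pos hε))
    refine ⟨N, fun n hn => ?_⟩
    obtain ⟨k, K, hk, hk0, hkK, hq, h⟩ := hN n hn.le
    have h0 : 0 ≤ normInftyOne fun f x => normLap (W n) f x - normLap (W 0) f x := by
      apply Real.sSup_nonneg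
      rintro r ⟨f, -, -, rfl⟩
      exact integral_nonneg fun _ => abs_nonneg _
    rw [Real.dist_0_eq_abs, abs_of_nonneg h0]
    have hle : (normInftyOne fun f x => normLap (W n) f x - normLap (W 0) f x) ≤ ε / 2 := by
      refine Real.sSup_le ?_ (by positivity)
      rintro r ⟨f, hf, hfb, rfl⟩
      have h1 := normLap_diff_le (W n) (W 0) hdeg hk hk0 hkK hf hfb
      have h2 := h f hf hfb
      linarith
    linarith

end
end

section
/- Fix 0 < α < 1 and a finite simple graph H with a distinguished labelled vertex 1. Let 𝒟_{H,α} be the set of graphons W such that μ({y ∈ [0,1] : t_y(H,W) = α}) = 0. Let (W_n)_{n≥1} ⊆ 𝒟_{H,α} and W_0 ∈ 𝒟_{H,α} with ‖W_n − W_0‖_□ → 0. For n ≥ 0 define c_n : [0,1] → {1,2} by c_n(y) = 1 if t_y(H, W_n) < α and c_n(y) = 2 if t_y(H, W_n) ≥ α. Then μ(c_n⁻¹(1) Δ c_0⁻¹(1)) → 0 and μ(c_n⁻¹(2) Δ c_0⁻¹(2)) → 0 as n → ∞; equivalently ‖(W_n, c_n) − (W_0, c_0)‖_□^S → 0 with S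 = {1,2}. -/
/-!
The proof shows that `G ↦ t_•(H, G)` is Lipschitz from the cut norm to `L¹[0,1]`, and that
`L¹` convergence forces convergence of the sets cut out by a level `α` that the limit does not
charge.

Lipschitz bound.  For measurable `f, g : [0,1] → [0,1]`, the integral of `f(x) g(y) U(x,y)` is
linear in `f` and in `g` separately, so indicators are extremal and it is at most the cut norm of
`U` in absolute value (`abs_integral_mul_le_cutNorm`).  Consider the integral over all vertex
positions of `φ(x_{v₀})` times the product of the edge factors.  Changing the graphon on one edge
`uw` changes this integral by at most `‖G - G'‖_□`: with all other coordinates frozen, each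
remaining factor depends on only one of `x_u`, `x_w` (`abs_integral_edge_le`).  Changing the edges
one at a time bounds `|∫ φ (t_•(H,G) - t_•(H,G'))|` by `|E(H)| ‖G - G'‖_□`, and taking `φ` to be
the indicator of `{t_•(H,G) ≥ t_•(H,G')}` and of its complement gives the `L¹` bound with constant
`2 |E(H)|` (`integral_abs_homDensity1_sub_le`).

Sublevel sets.  Where `t_n` and `t_0` lie on different sides of `α`, either `|t_0 - α| ≤ δ` or
`|t_n - t_0| ≥ δ`.  The first set has small measure for small `δ`, since `{t_0 = α}` is null; the
second has small measure for large `n` by Markov's inequality (`tendsto_volume_of_separated`).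
-/

open MeasureTheory Set Filter
open scoped symmDiff

noncomputable section

/-- Extend an assignment `x` of values to the non-root vertices by the value `y` at the
root vertex `v₀`. -/
def extFn {V : Type*} [DecidableEq V] (v₀ : V) (y : ℝ) (x : {v : V // v ≠ v₀} → ℝ) (v : V) : ℝ :=
  if h : v = v₀ then y else x ⟨v, h⟩

/-- The `1`-labelled homomorphism density `t_y(H, W)`: the labelled vertex `v₀` is
pinned at `y`, and the coordinates of all other vertices are integrated over `[0,1]`. -/
def homDensity1 {V : Type*} [Fintype V] [DecidableEq V] (H : SimpleGraph V)
    [DecidableRel H.Adj] (v₀ : V) (G : Graphon) (y : ℝ) : ℝ :=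
  ∫ x : {v : V // v ≠ v₀} → ℝ,
    (∏ e ∈ H.edgeFinset,
      Sym2.lift ⟨fun u w => G.W (extFn v₀ y x u) (extFn v₀ y x w),
        fun _ _ => G.symm _ _⟩ e)
    ∂(Measure.pi fun _ => volume.restrict I01)

/-! ### The cut norm against `[0,1]`-valued test functions -/

/-- Lebesgue measure on `[0,1]`, as a measure on `ℝ`. -/
abbrev unitMeasure : Measure ℝ := volume.restrict I01

instance : IsProbabilityMeasure unitMeasure :=
  ⟨by simp [unitMeasure, I01]⟩

theorem integrable_of_abs_le {X : Type*} [MeasurableSpace X] {μ : Measure X} [IsFiniteMeasure μ]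
    {f : X → ℝ} (hf : Measurable f) (C : ℝ) (hC : ∀ x, |f x| ≤ C) : Integrable f μ :=
  Integrable.of_bound hf.aestronglyMeasurable C (ae_of_all _ hC)

theorem abs_integral_le_of_abs_le {X : Type*} [MeasurableSpace X] {μ : Measure X}
    [IsProbabilityMeasure μ] {f : X → ℝ} {C : ℝ} (hC : ∀ x, |f x| ≤ C) : |∫ x, f x ∂μ| ≤ C := by
  simpa using norm_integral_le_of_norm_le_const (μ := μ) (f := f) (C := C) (ae_of_all _ hC)

theorem abs_mul_mul_le_one {a b c : ℝ} (ha : a ∈ Icc (0 : ℝ) 1) (hb : b ∈ Icc (0 : ℝ) 1)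
    (hc : |c| ≤ 1) : |a * b * c| ≤ 1 := by
  rw [abs_mul, abs_mul, abs_of_nonneg ha.1, abs_of_nonneg hb.1]
  exact mul_le_one₀ (mul_le_one₀ ha.2 hb.1 hb.2) (abs_nonneg _) hc

theorem indicator_one_mem_Icc (A : Set ℝ) (x : ℝ) :
    A.indicator (fun _ => (1 : ℝ)) x ∈ Icc (0 : ℝ) 1 := by
  by_cases h : x ∈ A <;> simp [h]

/-- For fixed `g`, the integral `∫∫ f(x) g(y) U(x,y)` is linear in `f`, hence is not decreased
when `f` is replaced by the indicator of the set where `∫ g(y) U(x,y) dy` is positive. -/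
theorem exists_indicator_left {U : ℝ → ℝ → ℝ} (hU : Measurable (Function.uncurry U))
    (hU1 : ∀ x y, |U x y| ≤ 1) {f g : ℝ → ℝ} (hf : Measurable f) (hg : Measurable g)
    (hf1 : ∀ x, f x ∈ Icc (0 : ℝ) 1) (hg1 : ∀ x, g x ∈ Icc (0 : ℝ) 1) :
    ∃ A : Set ℝ, MeasurableSet A ∧
      ∫ p : ℝ × ℝ, f p.1 * g p.2 * U p.1 p.2 ∂(unitMeasure.prod unitMeasure) ≤
      ∫ p : ℝ × ℝ, A.indicator (fun _ => (1 : ℝ)) p.1 * g p.2 * U p.1 p.2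
        ∂(unitMeasure.prod unitMeasure) := by
  have hU' : Measurable fun p : ℝ × ℝ => U p.1 p.2 := hU
  set h : ℝ → ℝ := fun x => ∫ y, g y * U x y ∂unitMeasure with hh
  have hgU : Measurable fun p : ℝ × ℝ => g p.2 * U p.1 p.2 := by fun_prop
  have hhm : Measurable h := by
    have : StronglyMeasurable h :=
      StronglyMeasurable.integral_prod_right (f := fun x y => g y * U x y)
        hgU.stronglyMeasurable
    exact this.measurable
  have hA : MeasurableSet {x | 0 < h x} := measurableSet_lt measurable_const hhm
  have key : ∀ f : ℝ → ℝ, Measurable f → (∀ x, f x ∈ Icc (0 : ℝ) 1) →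
      ∫ p : ℝ × ℝ, f p.1 * g p.2 * U p.1 p.2 ∂(unitMeasure.prod unitMeasure) =
        ∫ x, f x * h x ∂unitMeasure ∧ Integrable (fun x => f x * h x) unitMeasure := by
    intro f hf hf1
    have hint : Integrable (fun p : ℝ × ℝ => f p.1 * g p.2 * U p.1 p.2)
        (unitMeasure.prod unitMeasure) :=
      integrable_of_abs_le (by fun_prop) 1
        fun p => abs_mul_mul_le_one (hf1 _) (hg1 _) (hU1 _ _)
    have e : ∀ x, ∫ y, f x * g y * U x y ∂unitMeasure = f x * h x := by
      intro x
      simp only [hh, mul_assoc, integral_const_mul]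
    refine ⟨?_, ?_⟩
    · rw [integral_prod _ hint]
      exact integral_congr_ae (ae_of_all _ e)
    · exact hint.integral_prod_left.congr (ae_of_all _ e)
  have hIm : Measurable ({x | 0 < h x}.indicator fun _ => (1 : ℝ)) :=
    measurable_const.indicator hA
  refine ⟨_, hA, ?_⟩
  rw [(key f hf hf1).1, (key _ hIm (indicator_one_mem_Icc _)).1]
  refine integral_mono (key f hf hf1).2 (key _ hIm (indicator_one_mem_Icc _)).2 fun x => ?_
  by_cases hx : 0 < h x
  · simpa [hx] using mul_le_of_le_one_left hx.le (hf1 x).2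
  · simpa [hx] using mul_nonpos_of_nonneg_of_nonpos (hf1 x).1 (not_lt.1 hx)

/-- Testing a kernel against `[0,1]`-valued functions is dominated by testing it against
measurable rectangles. -/
theorem exists_rectangle {U : ℝ → ℝ → ℝ} (hU : Measurable (Function.uncurry U))
    (hU1 : ∀ x y, |U x y| ≤ 1) {f g : ℝ → ℝ} (hf : Measurable f) (hg : Measurable g)
    (hf1 : ∀ x, f x ∈ Icc (0 : ℝ) 1) (hg1 : ∀ x, g x ∈ Icc (0 : ℝ) 1) :
    ∃ A B : Set ℝ, MeasurableSet A ∧ MeasurableSet B ∧ A ⊆ I01 ∧ B ⊆ I01 ∧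
      ∫ p : ℝ × ℝ, f p.1 * g p.2 * U p.1 p.2 ∂(unitMeasure.prod unitMeasure) ≤
      ∫ x in A, ∫ y in B, U x y := by
  have hU' : Measurable fun p : ℝ × ℝ => U p.1 p.2 := hU
  obtain ⟨A, hA, h1⟩ := exists_indicator_left hU hU1 hf hg hf1 hg1
  have hAm : Measurable (A.indicator fun _ => (1 : ℝ)) := measurable_const.indicator hA
  obtain ⟨B, hB, h2⟩ := exists_indicator_left (U := fun x y => U y x)
    (hU'.comp measurable_swap) (fun x y => hU1 y x) hg hAm hg1 (indicator_one_mem_Icc A)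
  have hBm : Measurable (B.indicator fun _ => (1 : ℝ)) := measurable_const.indicator hB
  have hI : MeasurableSet I01 := measurableSet_Icc
  refine ⟨A ∩ I01, B ∩ I01, hA.inter hI, hB.inter hI, inter_subset_right, inter_subset_right,
    h1.trans ?_⟩
  rw [← integral_prod_swap]
  simp only [Prod.fst_swap, Prod.snd_swap]
  calc _ = ∫ p : ℝ × ℝ, g p.1 * A.indicator (fun _ => (1 : ℝ)) p.2 * U p.2 p.1
        ∂(unitMeasure.prod unitMeasure) := by
        simp only [mul_comm (g _)]
    _ ≤ _ := h2
    _ = ∫ p : ℝ × ℝ, A.indicator (fun _ => (1 : ℝ)) p.1 * B.indicator (fun _ => (1 : ℝ)) p.2 *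
          U p.1 p.2 ∂(unitMeasure.prod unitMeasure) := by
        rw [← integral_prod_swap]
        simp only [Prod.fst_swap, Prod.snd_swap, mul_comm (B.indicator _ _)]
    _ = ∫ x, ∫ y, A.indicator (fun _ => (1 : ℝ)) x * B.indicator (fun _ => (1 : ℝ)) y *
          U x y ∂unitMeasure ∂unitMeasure := by
        rw [integral_prod]
        exact integrable_of_abs_le (by fun_prop) 1 fun p => abs_mul_mul_le_one
          (indicator_one_mem_Icc _ _) (indicator_one_mem_Icc _ _) (hU1 _ _)
    _ = _ := by
        rw [← Measure.restrict_restrict hA, ← integral_indicator hA]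
        refine integral_congr_ae (ae_of_all _ fun x => ?_)
        simp only [mul_assoc, integral_const_mul]
        by_cases hx : x ∈ A
        · simp only [hx, indicator_of_mem, one_mul]
          rw [← Measure.restrict_restrict hB, ← integral_indicator hB]
          refine integral_congr_ae (ae_of_all _ fun y => ?_)
          by_cases hy : y ∈ B <;> simp [hy]
        · simp [hx]

/-- The set defining `cutNorm` is bounded, so its supremum is not a junk value. -/
theorem le_cutNorm {U : ℝ → ℝ → ℝ} (hU1 : ∀ x y, |U x y| ≤ 1) {A B : Set ℝ}
    (hA : MeasurableSet A) (hB : MeasurableSet B) (hAI : A ⊆ I01) (hBI : B ⊆ I01) :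
    |∫ x in A, ∫ y in B, U x y| ≤ cutNorm U := by
  refine le_csSup ⟨1, ?_⟩ ⟨A, B, hA, hB, hAI, hBI, rfl⟩
  rintro r ⟨A, B, -, -, hA, hB, rfl⟩
  have hI : volume I01 = 1 := by simp [I01]
  have hle : ∀ S : Set ℝ, S ⊆ I01 → volume S < ⊤ ∧ volume.real S ≤ 1 := by
    intro S hS
    have h1 : volume S ≤ 1 := hI ▸ measure_mono hS
    exact ⟨h1.trans_lt ENNReal.one_lt_top, ENNReal.toReal_le_of_le_ofReal zero_le_one (by simpa)⟩
  have hin : ∀ x, ‖∫ y in B, U x y‖ ≤ 1 := fun x =>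
    (norm_setIntegral_le_of_norm_le_const (hle B hB).1 fun y _ => hU1 x y).trans
      (by simpa using (hle B hB).2)
  exact (norm_setIntegral_le_of_norm_le_const (hle A hA).1 fun x _ => hin x).trans
      (by simpa using (hle A hA).2)

theorem Graphon.abs_sub_le_one (G G' : Graphon) (x y : ℝ) : |G.W x y - G'.W x y| ≤ 1 := by
  rw [abs_le]
  constructor <;> linarith [G.nonneg x y, G.le_one x y, G'.nonneg x y, G'.le_one x y]

theorem cutNorm_sub_comm (G G' : Graphon) :
    cutNorm (fun x y => G.W x y - G'.W x y) = cutNorm (fun x y => G'.W x y - G.W x y) := by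
  have h : ∀ A B : Set ℝ, |∫ x in A, ∫ y in B, (G.W x y - G'.W x y)| =
      |∫ x in A, ∫ y in B, (G'.W x y - G.W x y)| := by
    intro A B
    rw [← abs_neg, ← integral_neg]
    simp only [← integral_neg, neg_sub]
  simp only [cutNorm, h]

theorem abs_integral_mul_le_cutNorm (G G' : Graphon) {f g : ℝ → ℝ} (hf : Measurable f)
    (hg : Measurable g) (hf1 : ∀ x, f x ∈ Icc (0 : ℝ) 1) (hg1 : ∀ x, g x ∈ Icc (0 : ℝ) 1) :
    |∫ p : ℝ × ℝ, f p.1 * g p.2 * (G.W p.1 p.2 - G'.W p.1 p.2)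
      ∂(unitMeasure.prod unitMeasure)| ≤ cutNorm fun x y => G.W x y - G'.W x y := by
  have one_side : ∀ G G' : Graphon, ∫ p : ℝ × ℝ, f p.1 * g p.2 * (G.W p.1 p.2 - G'.W p.1 p.2)
      ∂(unitMeasure.prod unitMeasure) ≤ cutNorm fun x y => G.W x y - G'.W x y := by
    intro G G'
    obtain ⟨A, B, hA, hB, hAI, hBI, h⟩ := exists_rectangle
      (U := fun x y => G.W x y - G'.W x y) (G.measurable.sub G'.measurable)
      (G.abs_sub_le_one G') hf hg hf1 hg1
    exact h.trans ((le_abs_self _).trans (le_cutNorm (G.abs_sub_le_one G') hA hB hAI hBI))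
  refine abs_le'.2 ⟨one_side G G', ?_⟩
  rw [cutNorm_sub_comm, ← integral_neg]
  have h := one_side G' G
  simpa only [← mul_neg, neg_sub] using h

/-! ### Edge factors -/

section Edge

variable {V : Type*}

/-- The value `G(z_u, z_w)` of the graphon `G` on the (unordered) edge `e = uw`, for vertex
positions `z`. -/
def edgeVal (G : Graphon) (z : V → ℝ) (e : Sym2 V) : ℝ :=
  Sym2.lift ⟨fun u w => G.W (z u) (z w), fun _ _ => G.symm _ _⟩ e

theorem edgeVal_mem_Icc (G : Graphon) (z : V → ℝ) (e : Sym2 V) :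
    edgeVal G z e ∈ Icc (0 : ℝ) 1 := by
  induction e with
  | _ u w => exact ⟨G.nonneg _ _, G.le_one _ _⟩

theorem edgeVal_congr (G : Graphon) {z z' : V → ℝ} {e : Sym2 V} (h : ∀ v ∈ e, z v = z' v) :
    edgeVal G z e = edgeVal G z' e := by
  induction e with
  | _ u w => simp [edgeVal, h u (by simp), h w (by simp)]

theorem measurable_edgeVal (G : Graphon) (e : Sym2 V) :
    Measurable fun z : V → ℝ => edgeVal G z e := by
  induction e with
  | _ u w =>
    have h : Measurable fun z : V → ℝ => (z u, z w) :=
      (measurable_pi_apply u).prodMk (measurable_pi_apply w)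
    exact G.measurable.comp h

theorem prod_edgeVal_mem_Icc (K : Sym2 V → Graphon) (z : V → ℝ) (E : Finset (Sym2 V)) :
    ∏ e ∈ E, edgeVal (K e) z e ∈ Icc (0 : ℝ) 1 :=
  ⟨Finset.prod_nonneg fun e _ => (edgeVal_mem_Icc (K e) z e).1,
    Finset.prod_le_one (fun e _ => (edgeVal_mem_Icc (K e) z e).1)
      fun e _ => (edgeVal_mem_Icc (K e) z e).2⟩

theorem mul_mem_Icc {a b : ℝ} (ha : a ∈ Icc (0 : ℝ) 1) (hb : b ∈ Icc (0 : ℝ) 1) :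
    a * b ∈ Icc (0 : ℝ) 1 :=
  ⟨mul_nonneg ha.1 hb.1, mul_le_one₀ ha.2 hb.1 hb.2⟩

theorem abs_le_one_of_mem_Icc {a : ℝ} (ha : a ∈ Icc (0 : ℝ) 1) : |a| ≤ 1 := by
  rw [abs_of_nonneg ha.1]; exact ha.2

theorem edgeVal_abs_sub_le (G G' : Graphon) (z : V → ℝ) (e : Sym2 V) :
    |edgeVal G z e - edgeVal G' z e| ≤ 1 := by
  have h := edgeVal_mem_Icc G z e
  have h' := edgeVal_mem_Icc G' z e
  rw [abs_le]
  constructor <;> linarith [h.1, h.2, h'.1, h'.2]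

theorem measurable_prod_edgeVal (E : Finset (Sym2 V)) (G : Graphon) :
    Measurable fun z : V → ℝ => ∏ e ∈ E, edgeVal G z e :=
  Finset.measurable_fun_prod _ fun e _ => measurable_edgeVal G e

end Edge

/-! ### Resampling coordinates of a product measure -/

section Pi

variable {V : Type*} [Fintype V] [DecidableEq V]

/-- The uniform measure on `[0,1]^V`. -/
abbrev cubeMeasure (V : Type*) [Fintype V] : Measure (V → ℝ) := Measure.pi fun _ => unitMeasure

/-- Replacing one coordinate of a uniform point of the cube by an independent uniform value
yields a uniform point. -/
theorem measurePreserving_update (u : V) :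
    MeasurePreserving (fun q : (V → ℝ) × ℝ => Function.update q.1 u q.2)
      ((cubeMeasure V).prod unitMeasure) (cubeMeasure V) := by
  have hm : Measurable fun q : (V → ℝ) × ℝ => Function.update q.1 u q.2 := by
    refine measurable_pi_lambda _ fun v => ?_
    by_cases h : v = u
    · subst h; simpa using measurable_snd
    · simp only [Function.update_of_ne h]; fun_prop
  refine ⟨hm, (Measure.pi_eq fun s hs => ?_).symm⟩
  rw [Measure.map_apply hm (MeasurableSet.univ_pi hs)]
  have : (fun q : (V → ℝ) × ℝ => Function.update q.1 u q.2) ⁻¹' univ.pi s =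
      (univ.pi (Function.update s u univ)) ×ˢ s u := by
    ext ⟨x, a⟩
    simp only [mem_preimage, mem_univ_pi, mem_prod]
    constructor
    · intro h
      refine ⟨fun v => ?_, by simpa using h u⟩
      by_cases hv : v = u
      · subst hv; simp
      · simpa [hv] using h v
    · rintro ⟨h, ha⟩ v
      by_cases hv : v = u
      · subst hv; simpa using ha
      · simpa [hv] using h v
  rw [this, Measure.prod_prod, Measure.pi_pi, ← Finset.prod_erase_mul _ _ (Finset.mem_univ u),
    ← Finset.prod_erase_mul Finset.univ (fun v => unitMeasure (s v)) (Finset.mem_univ u)]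
  simp only [Function.update_self, measure_univ, mul_one]
  congr 1
  refine Finset.prod_congr rfl fun v hv => ?_
  rw [Function.update_of_ne (Finset.ne_of_mem_erase hv)]

theorem measurePreserving_update₂ (u w : V) :
    MeasurePreserving
      (fun q : (V → ℝ) × (ℝ × ℝ) => Function.update (Function.update q.1 u q.2.1) w q.2.2)
      ((cubeMeasure V).prod (unitMeasure.prod unitMeasure)) (cubeMeasure V) := by
  have h1 : MeasurePreserving
      (Prod.map (fun q : (V → ℝ) × ℝ => Function.update q.1 u q.2) (id : ℝ → ℝ))
      (((cubeMeasure V).prod unitMeasure).prod unitMeasure)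
      ((cubeMeasure V).prod unitMeasure) :=
    (measurePreserving_update u).prod (MeasurePreserving.id _)
  exact ((measurePreserving_update w).comp h1).comp
    ((measurePreserving_prodAssoc (cubeMeasure V) unitMeasure unitMeasure).symm _)

theorem measurePreserving_extFn (v₀ : V) :
    MeasurePreserving (fun q : ℝ × ({v : V // v ≠ v₀} → ℝ) => extFn v₀ q.1 q.2)
      (unitMeasure.prod (cubeMeasure {v : V // v ≠ v₀})) (cubeMeasure V) := by
  have hm : Measurable fun q : ℝ × ({v : V // v ≠ v₀} → ℝ) => extFn v₀ q.1 q.2 := by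
    refine measurable_pi_lambda _ fun v => ?_
    by_cases h : v = v₀
    · simpa [extFn, h] using measurable_fst
    · simp only [extFn, h, dite_false]; fun_prop
  refine ⟨hm, (Measure.pi_eq fun s hs => ?_).symm⟩
  rw [Measure.map_apply hm (MeasurableSet.univ_pi hs)]
  have : (fun q : ℝ × ({v : V // v ≠ v₀} → ℝ) => extFn v₀ q.1 q.2) ⁻¹' univ.pi s =
      s v₀ ×ˢ (univ.pi fun v : {v : V // v ≠ v₀} => s v) := by
    ext ⟨y, x⟩
    simp only [mem_preimage, mem_univ_pi, mem_prod]
    constructor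
    · intro h
      refine ⟨by simpa [extFn] using h v₀, fun v => by simpa [extFn, v.2] using h v⟩
    · rintro ⟨hy, h⟩ v
      by_cases hv : v = v₀
      · subst hv; simpa [extFn] using hy
      · simpa [extFn, hv] using h ⟨v, hv⟩
  rw [this, Measure.prod_prod, Measure.pi_pi, ← Finset.mul_prod_erase _ _ (Finset.mem_univ v₀)]
  congr 1
  exact (Finset.prod_subtype (Finset.univ.erase v₀) (by simp) fun v => unitMeasure (s v)).symm

/-! ### The counting lemma with a weight at the root -/

/-- Changing the graphon on a single edge `uw` changes the integral by at most the cut norm: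
once all coordinates but `u` and `w` are frozen, every other factor depends on at most one
of `x_u` and `x_w`, as `H` is simple. -/
theorem abs_integral_edge_le (E : Finset (Sym2 V)) (K : Sym2 V → Graphon) (G G' : Graphon)
    (e : Sym2 V) (he : ¬ e.IsDiag) (heE : e ∉ E) (v₀ : V) {φ : ℝ → ℝ} (hφ : Measurable φ)
    (hφ1 : ∀ x, φ x ∈ Icc (0 : ℝ) 1) :
    |∫ z, φ (z v₀) * (∏ e' ∈ E, edgeVal (K e') z e') * (edgeVal G z e - edgeVal G' z e)
      ∂(cubeMeasure V)| ≤ cutNorm fun x y => G.W x y - G'.W x y := by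
  have hmE : ∀ E : Finset (Sym2 V),
      Measurable fun z : V → ℝ => ∏ e' ∈ E, edgeVal (K e') z e' := fun E =>
    Finset.measurable_fun_prod _ fun e' _ => measurable_edgeVal (K e') e'
  have hF : Measurable fun z : V → ℝ =>
      φ (z v₀) * (∏ e' ∈ E, edgeVal (K e') z e') * (edgeVal G z e - edgeVal G' z e) :=
    ((hφ.comp (measurable_pi_apply v₀)).mul (hmE E)).mul
      ((measurable_edgeVal G e).sub (measurable_edgeVal G' e))
  have hF1 : ∀ z : V → ℝ,
      |φ (z v₀) * (∏ e' ∈ E, edgeVal (K e') z e') * (edgeVal G z e - edgeVal G' z e)| ≤ 1 :=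
    fun z => abs_mul_mul_le_one (hφ1 _) (prod_edgeVal_mem_Icc K z E) (edgeVal_abs_sub_le G G' z e)
  induction e with
  | _ u w =>
  have huw : u ≠ w := by simpa using he
  have hT := measurePreserving_update₂ u w
  rw [← hT.map_eq, integral_map hT.measurable.aemeasurable hF.aestronglyMeasurable,
    integral_prod]
  swap
  · exact integrable_of_abs_le (hF.comp hT.measurable) 1 fun q => hF1 _
  refine abs_integral_le_of_abs_le fun x => ?_
  set f : ℝ → ℝ := fun a => (if v₀ = u then φ a else 1) *
    ∏ e' ∈ E with u ∈ e', edgeVal (K e') (Function.update x u a) e' with hf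
  set g : ℝ → ℝ := fun b => (if v₀ = u then 1 else φ (Function.update x w b v₀)) *
    ∏ e' ∈ E with u ∉ e', edgeVal (K e') (Function.update x w b) e' with hg
  have hup : ∀ v, Measurable fun a : ℝ => Function.update x v a := fun v => measurable_update x
  have hfm : Measurable f := by
    refine Measurable.mul ?_ ((hmE _).comp (hup u))
    split_ifs
    exacts [hφ, measurable_const]
  have hgm : Measurable g := by
    refine Measurable.mul ?_ ((hmE _).comp (hup w))
    split_ifs
    exacts [measurable_const, hφ.comp ((measurable_pi_apply v₀).comp (hup w))]
  have h1 : (1 : ℝ) ∈ Icc (0 : ℝ) 1 := by simp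
  have hf1 : ∀ a, f a ∈ Icc (0 : ℝ) 1 := by
    intro a
    refine mul_mem_Icc ?_ (prod_edgeVal_mem_Icc _ _ _)
    split_ifs
    exacts [hφ1 _, h1]
  have hg1 : ∀ a, g a ∈ Icc (0 : ℝ) 1 := by
    intro a
    refine mul_mem_Icc ?_ (prod_edgeVal_mem_Icc _ _ _)
    split_ifs
    exacts [h1, hφ1 _]
  refine le_trans (le_of_eq ?_) (abs_integral_mul_le_cutNorm G G' hfm hgm hf1 hg1)
  congr 1
  refine integral_congr_ae (ae_of_all _ fun p => ?_)
  obtain ⟨a, b⟩ := p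
  set z := Function.update (Function.update x u a) w b with hz
  have hzu : z u = a := by simp [hz, huw]
  have hzw : z w = b := by simp [hz]
  have hprod : ∏ e' ∈ E, edgeVal (K e') z e' =
      (∏ e' ∈ E with u ∈ e', edgeVal (K e') (Function.update x u a) e') *
      ∏ e' ∈ E with u ∉ e', edgeVal (K e') (Function.update x w b) e' := by
    rw [← Finset.prod_filter_mul_prod_filter_not E (fun e' => u ∈ e')]
    congr 1
    · refine Finset.prod_congr rfl fun e' he' => edgeVal_congr _ fun v hv => ?_
      obtain ⟨he'E, hue'⟩ := Finset.mem_filter.1 he'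
      have hvw : v ≠ w := by
        rintro rfl
        exact heE (((Sym2.mem_and_mem_iff huw).1 ⟨hue', hv⟩) ▸ he'E)
      simp [hz, hvw]
    · refine Finset.prod_congr rfl fun e' he' => edgeVal_congr _ fun v hv => ?_
      obtain ⟨he'E, hue'⟩ := Finset.mem_filter.1 he'
      have hvu : v ≠ u := by
        rintro rfl
        exact hue' hv
      by_cases hvw : v = w
      · subst hvw; simp [hz]
      · simp [hz, hvw, hvu]
  have hroot : φ (z v₀) = (if v₀ = u then φ a else 1) *
      (if v₀ = u then 1 else φ (Function.update x w b v₀)) := by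
    split_ifs with h
    · rw [h, hzu, mul_one]
    · rw [one_mul]
      congr 1
      by_cases hvw : v₀ = w
      · subst hvw; simp [hz]
      · simp [hz, hvw, h]
  have hedge : ∀ G : Graphon, edgeVal G z s(u, w) = G.W a b := by
    intro G
    simp [edgeVal, hzu, hzw]
  simp only [hf, hg]
  rw [hprod, hroot, hedge, hedge]
  ring

/-- The counting lemma for a root weight `φ`, obtained by changing the graphon from `G'` to `G`
edge by edge. -/
theorem abs_integral_prod_sub_le (E : Finset (Sym2 V)) (hE : ∀ e ∈ E, ¬ e.IsDiag)
    (G G' : Graphon) (v₀ : V) {φ : ℝ → ℝ} (hφ : Measurable φ)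
    (hφ1 : ∀ x, φ x ∈ Icc (0 : ℝ) 1) :
    |∫ z, φ (z v₀) * (∏ e ∈ E, edgeVal G z e) ∂(cubeMeasure V) -
      ∫ z, φ (z v₀) * (∏ e ∈ E, edgeVal G' z e) ∂(cubeMeasure V)| ≤
      E.card * cutNorm fun x y => G.W x y - G'.W x y := by
  classical
  set c := cutNorm fun x y => G.W x y - G'.W x y with hc
  -- `K s` is the hybrid that uses `G` on the edges in `s` and `G'` elsewhere.
  let K : Finset (Sym2 V) → Sym2 V → Graphon := fun s e => if e ∈ s then G else G'
  let J : Finset (Sym2 V) → ℝ := fun s =>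
    ∫ z, φ (z v₀) * (∏ e ∈ E, edgeVal (K s e) z e) ∂(cubeMeasure V)
  have hint : ∀ s, Integrable (fun z : V → ℝ => φ (z v₀) * ∏ e ∈ E, edgeVal (K s e) z e)
      (cubeMeasure V) := fun s =>
    integrable_of_abs_le ((hφ.comp (measurable_pi_apply v₀)).mul
      (Finset.measurable_fun_prod _ fun e _ => measurable_edgeVal (K s e) e)) 1
      fun z => abs_le_one_of_mem_Icc (mul_mem_Icc (hφ1 _) (prod_edgeVal_mem_Icc _ _ _))
  have main : ∀ s, s ⊆ E → |J s - J ∅| ≤ s.card * c := by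
    intro s
    induction s using Finset.induction_on with
    | empty => intro; simp
    | insert e s hes ih =>
      intro hs
      have heE : e ∈ E := hs (Finset.mem_insert_self e s)
      have hstep : |J (insert e s) - J s| ≤ c := by
        refine le_trans (le_of_eq ?_) (abs_integral_edge_le (E.erase e) (K s) G G' e
          (hE e heE) (Finset.notMem_erase e E) v₀ hφ hφ1)
        congr 1
        simp only [J]
        rw [← integral_sub (hint _) (hint _)]
        congr 1
        funext z
        rw [← Finset.prod_erase_mul E _ heE, ← Finset.prod_erase_mul E _ heE]
        have h1 : ∏ e' ∈ E.erase e, edgeVal (K (insert e s) e') z e' =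
            ∏ e' ∈ E.erase e, edgeVal (K s e') z e' := by
          refine Finset.prod_congr rfl fun e' he' => ?_
          simp [K, Finset.ne_of_mem_erase he']
        have h2 : K (insert e s) e = G := by simp [K]
        have h3 : K s e = G' := by simp [K, hes]
        rw [h1, h2, h3]
        ring
      have h := ih ((Finset.subset_insert e s).trans hs)
      calc |J (insert e s) - J ∅| ≤ |J (insert e s) - J s| + |J s - J ∅| := abs_sub_le _ _ _
        _ ≤ c + s.card * c := add_le_add hstep h
        _ = _ := by rw [Finset.card_insert_of_notMem hes]; push_cast; ring
  have hJE : J E = ∫ z, φ (z v₀) * (∏ e ∈ E, edgeVal G z e) ∂(cubeMeasure V) := by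
    simp only [J]
    congr 1
    funext z
    congr 1
    exact Finset.prod_congr rfl fun e he => by simp [K, he]
  have hJ0 : J ∅ = ∫ z, φ (z v₀) * (∏ e ∈ E, edgeVal G' z e) ∂(cubeMeasure V) := by
    simp [J, K]
  rw [← hJE, ← hJ0]
  exact main E subset_rfl

/-! ### Convergence of rooted densities in `L¹` -/

theorem homDensity1_eq (H : SimpleGraph V) [DecidableRel H.Adj] (v₀ : V) (G : Graphon) (y : ℝ) :
    homDensity1 H v₀ G y = ∫ x, ∏ e ∈ H.edgeFinset, edgeVal G (extFn v₀ y x) e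
      ∂(cubeMeasure {v : V // v ≠ v₀}) := rfl

theorem measurable_homDensity1 (H : SimpleGraph V) [DecidableRel H.Adj] (v₀ : V) (G : Graphon) :
    Measurable (homDensity1 H v₀ G) := by
  have h : StronglyMeasurable fun y => ∫ x, ∏ e ∈ H.edgeFinset, edgeVal G (extFn v₀ y x) e
      ∂(cubeMeasure {v : V // v ≠ v₀}) :=
    StronglyMeasurable.integral_prod_right
      (f := fun y x => ∏ e ∈ H.edgeFinset, edgeVal G (extFn v₀ y x) e)
      ((measurable_prod_edgeVal H.edgeFinset G).comp
        (measurePreserving_extFn v₀).measurable).stronglyMeasurable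
  exact h.measurable

theorem abs_homDensity1_le_one (H : SimpleGraph V) [DecidableRel H.Adj] (v₀ : V) (G : Graphon)
    (y : ℝ) : |homDensity1 H v₀ G y| ≤ 1 := by
  rw [homDensity1_eq]
  refine abs_integral_le_of_abs_le fun x => ?_
  exact abs_le_one_of_mem_Icc (prod_edgeVal_mem_Icc (fun _ => G) _ _)

theorem integral_mul_homDensity1 (H : SimpleGraph V) [DecidableRel H.Adj] (v₀ : V) (G : Graphon)
    {φ : ℝ → ℝ} (hφ : Measurable φ) (hφ1 : ∀ x, φ x ∈ Icc (0 : ℝ) 1) :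
    ∫ y, φ y * homDensity1 H v₀ G y ∂unitMeasure =
      ∫ z, φ (z v₀) * (∏ e ∈ H.edgeFinset, edgeVal G z e) ∂(cubeMeasure V) := by
  have hT := measurePreserving_extFn v₀
  have hF : Measurable fun z : V → ℝ => φ (z v₀) * ∏ e ∈ H.edgeFinset, edgeVal G z e :=
    (hφ.comp (measurable_pi_apply v₀)).mul (measurable_prod_edgeVal _ G)
  rw [← hT.map_eq, integral_map hT.measurable.aemeasurable hF.aestronglyMeasurable,
    integral_prod]
  swap
  · exact integrable_of_abs_le (hF.comp hT.measurable) 1 fun q =>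
      abs_le_one_of_mem_Icc (mul_mem_Icc (hφ1 _) (prod_edgeVal_mem_Icc (fun _ => G) _ _))
  refine integral_congr_ae (ae_of_all _ fun y => ?_)
  simp only [homDensity1_eq, ← integral_const_mul]
  simp [extFn]

/-- The map `G ↦ t_•(H, G)` is Lipschitz from the cut norm to `L¹`: test against the
indicator of the set where one density exceeds the other, and against that of its complement. -/
theorem integral_abs_homDensity1_sub_le (H : SimpleGraph V) [DecidableRel H.Adj] (v₀ : V)
    (G G' : Graphon) :
    ∫ y, |homDensity1 H v₀ G y - homDensity1 H v₀ G' y| ∂unitMeasure ≤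
      2 * H.edgeFinset.card * cutNorm fun x y => G.W x y - G'.W x y := by
  have hm := measurable_homDensity1 H v₀ G
  have hm' := measurable_homDensity1 H v₀ G'
  set t := homDensity1 H v₀ G with ht
  set t' := homDensity1 H v₀ G' with ht'
  set S : Set ℝ := {y | t' y ≤ t y} with hSdef
  have hS : MeasurableSet S := measurableSet_le hm' hm
  have key : ∀ A : Set ℝ, MeasurableSet A →
      |∫ y in A, (t y - t' y) ∂unitMeasure| ≤
        H.edgeFinset.card * cutNorm fun x y => G.W x y - G'.W x y := by
    intro A hA
    have hφ : Measurable (A.indicator fun _ => (1 : ℝ)) := measurable_const.indicator hA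
    have h := abs_integral_prod_sub_le H.edgeFinset
      (fun e he => H.not_isDiag_of_mem_edgeSet (SimpleGraph.mem_edgeFinset.1 he)) G G' v₀ hφ
      (indicator_one_mem_Icc A)
    rw [← integral_mul_homDensity1 H v₀ G hφ (indicator_one_mem_Icc A),
      ← integral_mul_homDensity1 H v₀ G' hφ (indicator_one_mem_Icc A)] at h
    have hi : ∀ G : Graphon, ∫ y, A.indicator (fun _ => (1 : ℝ)) y * homDensity1 H v₀ G y
        ∂unitMeasure = ∫ y in A, homDensity1 H v₀ G y ∂unitMeasure := by
      intro G
      rw [← integral_indicator hA]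
      congr 1
      funext y
      by_cases hy : y ∈ A <;> simp [hy]
    rw [hi, hi] at h
    rwa [integral_sub]
    · exact integrable_of_abs_le hm 1 (abs_homDensity1_le_one H v₀ G)
    · exact integrable_of_abs_le hm' 1 (abs_homDensity1_le_one H v₀ G')
  have hint : Integrable (fun y => |t y - t' y|) unitMeasure :=
    ((integrable_of_abs_le hm 1 (abs_homDensity1_le_one H v₀ G)).sub
      (integrable_of_abs_le hm' 1 (abs_homDensity1_le_one H v₀ G'))).abs
  rw [← integral_add_compl hS hint]
  have e1 : ∫ y in S, |t y - t' y| ∂unitMeasure = ∫ y in S, (t y - t' y) ∂unitMeasure :=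
    setIntegral_congr_fun hS fun y hy => abs_of_nonneg (sub_nonneg.2 hy)
  have e2 : ∫ y in Sᶜ, |t y - t' y| ∂unitMeasure = -∫ y in Sᶜ, (t y - t' y) ∂unitMeasure := by
    rw [← integral_neg]
    exact setIntegral_congr_fun hS.compl fun y hy =>
      abs_of_nonpos (sub_nonpos.2 (le_of_not_ge hy))
  rw [e1, e2]
  have h1 := (le_abs_self _).trans (key S hS)
  have h2 := (neg_le_abs _).trans (key Sᶜ hS.compl)
  linarith

end Pi

/-! ### Convergence of sublevel sets -/

/-- If `t n → t 0` in `L¹[0,1]` and `t 0` does not charge the level `α`, then sets `D n` on which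
`|t 0 - α| ≤ |t n - t 0|` have measure tending to `0`. The hypothesis on `D n` holds in particular
wherever `t n` and `t 0` lie on different sides of `α`; it puts every point of `D n` in
`{|t 0 - α| ≤ δ}` or `{|t n - t 0| ≥ δ}`, for each `δ > 0`. -/
theorem tendsto_volume_of_separated {t : ℕ → ℝ → ℝ} {α : ℝ} (hm : ∀ n, Measurable (t n))
    (hint : ∀ n, Integrable (fun y => |t n y - t 0 y|) unitMeasure)
    (hlim : Tendsto (fun n => ∫ y, |t n y - t 0 y| ∂unitMeasure) atTop (nhds 0))
    (hα : volume {y ∈ I01 | t 0 y = α} = 0) (D : ℕ → Set ℝ) (hDI : ∀ n, D n ⊆ I01)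
    (hD : ∀ n, ∀ y ∈ D n, |t 0 y - α| ≤ |t n y - t 0 y|) :
    Tendsto (fun n => (volume (D n)).toReal) atTop (nhds 0) := by
  have hI : MeasurableSet I01 := measurableSet_Icc
  have hα' : unitMeasure {y | t 0 y = α} = 0 := by
    rw [Measure.restrict_apply (measurableSet_eq_fun (hm 0) measurable_const), inter_comm]
    exact hα
  have hvol : ∀ n, (volume (D n)).toReal = unitMeasure.real (D n) := by
    intro n
    rw [measureReal_def, Measure.restrict_apply' hI, inter_eq_left.2 (hDI n)]
  let L : ℝ → Set ℝ := fun δ => {y | |t 0 y - α| ≤ δ}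
  have hLm : ∀ δ, MeasurableSet (L δ) := fun δ =>
    measurableSet_le ((hm 0).sub_const α).abs measurable_const
  have hL : Tendsto (unitMeasure ∘ L) (nhdsWithin 0 (Ioi 0)) (nhds 0) := by
    have h := tendsto_measure_biInter_gt (μ := unitMeasure) (s := L) (a := (0 : ℝ))
      (fun δ _ => (hLm δ).nullMeasurableSet)
      (fun i j _ hij y hy => le_trans hy hij) ⟨1, one_pos, measure_ne_top _ _⟩
    have he : (⋂ r > (0 : ℝ), L r) = {y | t 0 y = α} := by
      ext y
      simp only [L, mem_iInter, mem_ofPred_eq]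
      constructor
      · intro h
        have : |t 0 y - α| ≤ 0 := le_of_forall_gt_imp_ge_of_dense h
        exact sub_eq_zero.1 (abs_nonpos_iff.1 this)
      · rintro h r hr
        simpa [h] using hr.le
    rwa [he, hα'] at h
  rw [Metric.tendsto_atTop]
  intro ε hε
  obtain ⟨δ, hδL, hδ⟩ : ∃ δ, unitMeasure (L δ) < ENNReal.ofReal (ε / 2) ∧ 0 < δ :=
    ((hL.eventually (gt_mem_nhds (ENNReal.ofReal_pos.2 (half_pos hε)))).and
      self_mem_nhdsWithin).exists
  have hLr : unitMeasure.real (L δ) < ε / 2 :=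
    (ENNReal.lt_ofReal_iff_toReal_lt (measure_ne_top _ _)).1 hδL
  obtain ⟨N, hN⟩ := (hlim.eventually (gt_mem_nhds (mul_pos hδ (half_pos hε)))).exists_forall_of_atTop
  refine ⟨N, fun n hn => ?_⟩
  rw [Real.dist_eq, sub_zero, abs_of_nonneg ENNReal.toReal_nonneg, hvol]
  have hmarkov : unitMeasure.real {y | δ ≤ |t n y - t 0 y|} < ε / 2 := by
    have h := mul_meas_ge_le_integral_of_nonneg (ae_of_all _ fun y => abs_nonneg _) (hint n) δ
    exact lt_of_mul_lt_mul_left (h.trans_lt (hN n hn)) hδ.le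
  have hcover : D n ⊆ L δ ∪ {y | δ ≤ |t n y - t 0 y|} := by
    intro y hy
    by_cases h : |t 0 y - α| ≤ δ
    · exact Or.inl h
    · exact Or.inr ((not_le.1 h).le.trans (hD n y hy))
  calc unitMeasure.real (D n) ≤ unitMeasure.real (L δ ∪ {y | δ ≤ |t n y - t 0 y|}) :=
        measureReal_mono hcover
    _ ≤ unitMeasure.real (L δ) + unitMeasure.real {y | δ ≤ |t n y - t 0 y|} :=
        measureReal_union_le _ _
    _ < ε := by linarith

/-- **Structural consistency of clustering by a `1`-labelled homomorphism density.**
Fix `0 < α < 1` and a `1`-labelled graph `(H, v₀)`.  Suppose all graphons `W n`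
(with `W 0` the limit) lie in `𝒟_{H,α}`, i.e. `{y : t_y(H, W n) = α}` is a null set,
and `‖W n − W 0‖_□ → 0`.  Coloring `y` by `1` if `t_y(H, W n) < α` and by `2`
otherwise, the color classes converge:
`μ(c_n⁻¹(1) Δ c_0⁻¹(1)) → 0` and `μ(c_n⁻¹(2) Δ c_0⁻¹(2)) → 0`. -/
theorem homDensity_clustering_consistent
    {V : Type*} [Fintype V] [DecidableEq V] (H : SimpleGraph V)
    [DecidableRel H.Adj] (v₀ : V) (α : ℝ) (hα0 : 0 < α) (hα1 : α < 1)
    (W : ℕ → Graphon)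
    (hD : ∀ n, volume {y ∈ I01 | homDensity1 H v₀ (W n) y = α} = 0)
    (hconv : Tendsto (fun n => cutNorm fun x y => (W n).W x y - (W 0).W x y)
      atTop (nhds 0)) :
    Tendsto (fun n =>
        (volume (({y ∈ I01 | homDensity1 H v₀ (W n) y < α}) ∆
          ({y ∈ I01 | homDensity1 H v₀ (W 0) y < α}))).toReal) atTop (nhds 0) ∧
    Tendsto (fun n =>
        (volume (({y ∈ I01 | α ≤ homDensity1 H v₀ (W n) y}) ∆
          ({y ∈ I01 | α ≤ homDensity1 H v₀ (W 0) y}))).toReal) atTop (nhds 0) := by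
  have hlim : Tendsto (fun n => ∫ y, |homDensity1 H v₀ (W n) y - homDensity1 H v₀ (W 0) y|
      ∂unitMeasure) atTop (nhds 0) := by
    refine squeeze_zero (fun n => integral_nonneg fun y => abs_nonneg _)
      (fun n => integral_abs_homDensity1_sub_le H v₀ (W n) (W 0)) ?_
    simpa using hconv.const_mul (2 * (H.edgeFinset.card : ℝ))
  have hti : ∀ n, Integrable (homDensity1 H v₀ (W n)) unitMeasure := fun n =>
    integrable_of_abs_le (measurable_homDensity1 H v₀ (W n)) 1 (abs_homDensity1_le_one H v₀ (W n))
  have main := tendsto_volume_of_separated (t := fun n => homDensity1 H v₀ (W n))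
    (fun n => measurable_homDensity1 H v₀ (W n))
    (fun n => ((hti n).sub (hti 0)).abs) hlim (hD 0)
  constructor
  · refine main _ (fun n y hy => ?_) (fun n y hy => ?_)
    · rcases hy with hy | hy
      exacts [hy.1.1, hy.1.1]
    · simp only [mem_symmDiff, mem_ofPred_eq] at hy
      rcases hy with ⟨⟨hI, h1⟩, h2⟩ | ⟨⟨hI, h1⟩, h2⟩
      · have h2' : α ≤ homDensity1 H v₀ (W 0) y := not_lt.1 fun h => h2 ⟨hI, h⟩
        rw [abs_of_nonneg (by linarith), abs_of_nonpos (by linarith)]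
        linarith
      · have h2' : α ≤ homDensity1 H v₀ (W n) y := not_lt.1 fun h => h2 ⟨hI, h⟩
        rw [abs_of_nonpos (by linarith), abs_of_nonneg (by linarith)]
        linarith
  · refine main _ (fun n y hy => ?_) (fun n y hy => ?_)
    · rcases hy with hy | hy
      exacts [hy.1.1, hy.1.1]
    · simp only [mem_symmDiff, mem_ofPred_eq] at hy
      rcases hy with ⟨⟨hI, h1⟩, h2⟩ | ⟨⟨hI, h1⟩, h2⟩
      · have h2' : homDensity1 H v₀ (W 0) y < α := not_le.1 fun h => h2 ⟨hI, h⟩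
        rw [abs_of_nonpos (by linarith), abs_of_nonneg (by linarith)]
        linarith
      · have h2' : homDensity1 H v₀ (W n) y < α := not_le.1 fun h => h2 ⟨hI, h⟩
        rw [abs_of_nonneg (by linarith), abs_of_nonpos (by linarith)]
        linarith

end
end
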